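/- arXiv:math-ph/0008007 — 2 statements merged into one kernel-verified Lean document; each statement's English description precedes it below -/
import Mathlib

section
/- For all m, n ∈ ℕ, the Born–Jordan ordering identity holds in End_ℂ(V): (1/(m+1)) · Σ_{l=0}^{m} (−iħ·a)^l ∘ (a†)^n ∘ (−iħ·a)^{m−l} = Σ_{s=0}^{min(m,n)} ((iħ)^s · m!·n!/((s+1)!·(m−s)!·(n−s)!)) · F^{(m−s,n−s)}. -/
open Complex MvPolynomial Finset

noncomputable section

/-- The standard basis vector `e n` of `V = ℕ →₀ ℂ`. -/
def e (n : ℕ) : ℕ →₀ ℂ := Finsupp.single n 1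

/-- The destruction operator `a`: `a (e 0) = 0`, `a (e (n+1)) = √(n+1) • e n`. -/
def aop : (ℕ →₀ ℂ) →ₗ[ℂ] (ℕ →₀ ℂ) :=
  Finsupp.lsum ℂ fun n => match n with
    | 0 => 0
    | k + 1 => ((Real.sqrt (k + 1) : ℝ) : ℂ) • Finsupp.lsingle k

/-- The creation operator `a†`: `a† (e n) = √(n+1) • e (n+1)`. -/
def adop : (ℕ →₀ ℂ) →ₗ[ℂ] (ℕ →₀ ℂ) :=
  Finsupp.lsum ℂ fun n => ((Real.sqrt (n + 1) : ℝ) : ℂ) • Finsupp.lsingle (n + 1)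

/-- `F^{(m,n)} = (−iℏ·a)^m ∘ (a†)^n` as an element of `End_ℂ(V)`. -/
def F (ℏ : ℝ) (m n : ℕ) : Module.End ℂ (ℕ →₀ ℂ) :=
  ((-(Complex.I * ℏ)) • (aop : Module.End ℂ (ℕ →₀ ℂ))) ^ m * (adop : Module.End ℂ (ℕ →₀ ℂ)) ^ n

lemma comm_pow {A : Type*} [Ring A] [Algebra ℂ A] (P X : A) (c : ℂ)
    (h : X * P = P * X + c • 1) (n : ℕ) :
    X ^ n * P = P * X ^ n + ((n : ℂ) * c) • X ^ (n - 1) := by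
  induction n with
  | zero => simp
  | succ n ih =>
    have hx : ((n : ℂ) * c) • (X * X ^ (n - 1)) = ((n : ℂ) * c) • X ^ n := by
      cases n with
      | zero => simp
      | succ k => simp [pow_succ']
    rw [pow_succ', mul_assoc, ih, mul_add, ← mul_assoc, h, mul_smul_comm, hx]
    simp only [add_mul, mul_assoc, smul_mul_assoc, one_mul, Nat.add_sub_cancel]
    push_cast
    module

lemma pow_pow_comm {A : Type*} [Ring A] [Algebra ℂ A] (P X : A) (c : ℂ)
    (h : X * P = P * X + c • 1) (k : ℕ) : ∀ n : ℕ,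
    X ^ n * P ^ k = ∑ s ∈ Finset.range (k + 1),
      ((k.choose s : ℂ) * (n.descFactorial s : ℂ) * c ^ s) • (P ^ (k - s) * X ^ (n - s)) := by
  induction k with
  | zero => intro n; simp
  | succ k ih =>
    intro n
    rw [pow_succ', ← mul_assoc, comm_pow P X c h, add_mul, mul_assoc, smul_mul_assoc, ih, ih,
      Finset.sum_range_succ' _ (k + 1), Finset.mul_sum, Finset.smul_sum]
    have h1 : ∑ i ∈ Finset.range (k + 1), P * (((k.choose i : ℂ) * (n.descFactorial i : ℂ) * c ^ i) •
        (P ^ (k - i) * X ^ (n - i))) = ∑ i ∈ Finset.range (k + 1 + 1),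
        (((k.choose i : ℂ) * (n.descFactorial i : ℂ) * c ^ i) •
        (P ^ (k + 1 - i) * X ^ (n - i))) := by
      rw [Finset.sum_range_succ _ (k + 1)]
      simp only [Nat.choose_succ_self, Nat.cast_zero, zero_mul, zero_smul, add_zero]
      refine Finset.sum_congr rfl fun i hi => ?_
      have : i ≤ k := by simpa [Nat.lt_succ_iff] using hi
      rw [mul_smul_comm, ← mul_assoc, ← pow_succ', Nat.succ_sub this]
    rw [h1, Finset.sum_range_succ' _ (k + 1), add_right_comm, ← Finset.sum_add_distrib]
    congr 1
    · refine Finset.sum_congr rfl fun i hi => ?_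
      have hd : (n.descFactorial (i + 1) : ℂ) = n * ((n - 1).descFactorial i : ℂ) := by
        cases n with
        | zero => simp
        | succ j => rw [Nat.succ_descFactorial_succ]; push_cast; simp
      rw [Nat.add_sub_add_right, Nat.sub_sub, Nat.add_comm 1 i, smul_smul, ← add_smul, hd,
        Nat.choose_succ_succ]
      congr 1
      push_cast
      ring
    · simp

lemma ccr : (aop : Module.End ℂ (ℕ →₀ ℂ)) * adop = (adop : Module.End ℂ (ℕ →₀ ℂ)) * aop + 1 := by
  have hs (x : ℕ) : ((Real.sqrt (x + 1) : ℝ) : ℂ) * ((Real.sqrt (x + 1) : ℝ) : ℂ) = x + 1 := by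
    rw [← Complex.ofReal_mul, Real.mul_self_sqrt (by positivity)]; push_cast; rfl
  have had (n : ℕ) (z : ℂ) : adop (Finsupp.single n z) =
      Finsupp.single (n + 1) (((Real.sqrt (n + 1) : ℝ) : ℂ) * z) := by simp [adop]
  have ha0 (z : ℂ) : aop (Finsupp.single 0 z) = 0 := by simp [aop]
  have ha (n : ℕ) (z : ℂ) : aop (Finsupp.single (n + 1) z) =
      Finsupp.single n (((Real.sqrt (n + 1) : ℝ) : ℂ) * z) := by simp [aop]
  refine Finsupp.lhom_ext fun n z => ?_
  simp only [Module.End.mul_apply, LinearMap.add_apply, Module.End.one_apply, had, ha]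
  rw [← mul_assoc, hs]
  cases n with
  | zero => simp [ha0]
  | succ k =>
    rw [ha, had, ← mul_assoc, hs, ← Finsupp.single_add]
    congr 1; push_cast; ring

/-- the Born–Jordan ordering identity
`(1/(m+1)) Σ_{l=0}^m (−iℏa)^l (a†)^n (−iℏa)^{m−l}
  = Σ_{s=0}^{min(m,n)} ((iℏ)^s m!n!/((s+1)!(m−s)!(n−s)!)) F^{(m−s,n−s)}`. -/
theorem stmt13 (ℏ : ℝ) (hℏ : ℏ ≠ 0) (m n : ℕ) :
    ((1 : ℂ) / (m + 1)) •
        ∑ l ∈ Finset.range (m + 1),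
          ((-(Complex.I * ℏ)) • (aop : Module.End ℂ (ℕ →₀ ℂ))) ^ l *
            (adop : Module.End ℂ (ℕ →₀ ℂ)) ^ n *
            ((-(Complex.I * ℏ)) • (aop : Module.End ℂ (ℕ →₀ ℂ))) ^ (m - l) =
      ∑ s ∈ Finset.range (min m n + 1),
        ((Complex.I * ℏ) ^ s * (m.factorial * n.factorial : ℂ) /
          ((s + 1).factorial * (m - s).factorial * (n - s).factorial)) •
          F ℏ (m - s) (n - s) := by
  have hc : (adop : Module.End ℂ (ℕ →₀ ℂ)) * ((-(Complex.I * ℏ)) • (aop : Module.End ℂ (ℕ →₀ ℂ)))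
      = ((-(Complex.I * ℏ)) • (aop : Module.End ℂ (ℕ →₀ ℂ))) * adop + (Complex.I * ℏ) • 1 := by
    rw [mul_smul_comm, smul_mul_assoc, ccr]
    module
  unfold F
  generalize (-(Complex.I * ℏ)) • (aop : Module.End ℂ (ℕ →₀ ℂ)) = P at *
  generalize (adop : Module.End ℂ (ℕ →₀ ℂ)) = X at *
  generalize Complex.I * (ℏ : ℂ) = c at *
  have h1 : ∀ l ∈ Finset.range (m + 1), P ^ l * X ^ n * P ^ (m - l) =
      ∑ s ∈ Finset.range (m + 1), (((m - l).choose s : ℂ) * (n.descFactorial s : ℂ) * c ^ s) •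
        (P ^ (m - s) * X ^ (n - s)) := by
    intro l hl
    have hl' : l ≤ m := by simpa [Nat.lt_succ_iff] using hl
    rw [mul_assoc, pow_pow_comm P X c hc, Finset.mul_sum]
    rw [← Finset.sum_subset (Finset.range_subset_range.2 (by omega : m - l + 1 ≤ m + 1))]
    · refine Finset.sum_congr rfl fun s hs => ?_
      have hs' : s ≤ m - l := by simpa [Nat.lt_succ_iff] using hs
      rw [mul_smul_comm, ← mul_assoc, ← pow_add]
      congr 4
      omega
    · intro s _ hs
      have : m - l < s := by simpa using hs
      simp [Nat.choose_eq_zero_of_lt this]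
  rw [Finset.sum_congr rfl h1, Finset.sum_comm, Finset.smul_sum]
  symm
  rw [Finset.sum_subset_zero_on_sdiff
    (Finset.range_subset_range.2 (by omega : min m n + 1 ≤ m + 1)) (g := fun s =>
      ((1 : ℂ) / (m + 1)) • ∑ l ∈ Finset.range (m + 1),
        (((m - l).choose s : ℂ) * (n.descFactorial s : ℂ) * c ^ s) • (P ^ (m - s) * X ^ (n - s)))]
  · intro s hs
    have : n < s := by simp at hs; omega
    simp [Nat.descFactorial_eq_zero_iff_lt.2 this]
  · intro s hs
    have hs' : s ≤ m ∧ s ≤ n := by simp at hs; omega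
    obtain ⟨hm, hn⟩ := hs'
    have hsum : ∑ l ∈ Finset.range (m + 1), ((m - l).choose s : ℂ) = ((m + 1).choose (s + 1) : ℂ) := by
      have h2 := Finset.sum_range_reflect (fun j => j.choose s) (m + 1)
      simp only [Nat.add_sub_cancel] at h2
      have h3 : ∀ k : ℕ, ∑ j ∈ Finset.range k, j.choose s = k.choose (s + 1) := by
        intro k
        induction k with
        | zero => simp
        | succ k ih => rw [Finset.sum_range_succ, ih, Nat.choose_succ_succ, Nat.add_comm]
      rw [h3] at h2
      rw [← h2]
      push_cast
      refine Finset.sum_congr rfl fun l _ => ?_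
      congr 2
    rw [← Finset.sum_smul, smul_smul, ← Finset.sum_mul, ← Finset.sum_mul, hsum]
    congr 1
    have e1 : ((n - s).factorial : ℂ) * n.descFactorial s = n.factorial := by
      exact_mod_cast Nat.factorial_mul_descFactorial hn
    have e2 : ((m + 1).choose (s + 1) : ℂ) * (s + 1).factorial * (m - s).factorial
        = (m + 1) * m.factorial := by
      have := Nat.choose_mul_factorial_mul_factorial (Nat.succ_le_succ hm)
      rw [Nat.succ_sub_succ, Nat.factorial_succ m] at this
      exact_mod_cast this
    have f1 : ((n - s).factorial : ℂ) ≠ 0 := by exact_mod_cast Nat.factorial_ne_zero _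
    have f2 : ((m - s).factorial : ℂ) ≠ 0 := by exact_mod_cast Nat.factorial_ne_zero _
    have f3 : ((s + 1).factorial : ℂ) ≠ 0 := by exact_mod_cast Nat.factorial_ne_zero _
    have f4 : (m + 1 : ℂ) ≠ 0 := by exact_mod_cast Nat.succ_ne_zero m
    rw [div_eq_iff (by simp [f1, f2, f3]), ← e1, ← mul_right_inj' f4]
    field_simp
    linear_combination (-c ^ s * n.descFactorial s) * e2

end
end

section
/- Define the linear map Φ_W : ℂ[x,p] → End_ℂ(V) on the monomial basis by Φ_W(p^m x^n) = Σ_{s=0}^{min(m,n)} ((iħ)^s · m!·n!/(2^s·s!·(m−s)!·(n−s)!)) · F^{(m−s,n−s)}. Then Φ_W is a homomorphism from the Moyal algebra to operators: for all polynomials A, B ∈ ℂ[x,p], Φ_W(A ⋆ B) = Φ_W(A) ∘ Φ_W(B), where ⋆ is the Moyal product. -/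
open Complex MvPolynomial Finset

noncomputable section

/-- The polynomial algebra ℂ[x,p] in two commuting variables. -/
abbrev Pxp := MvPolynomial (Fin 2) ℂ

/-- The variable `x`. -/
def xv : Pxp := X 0
/-- The variable `p`. -/
def pv : Pxp := X 1

/-- The partial derivative `∂_x` as a linear endomorphism. -/
def Dx : Module.End ℂ Pxp := (pderiv (0 : Fin 2)).toLinearMap
/-- The partial derivative `∂_p` as a linear endomorphism. -/
def Dp : Module.End ℂ Pxp := (pderiv (1 : Fin 2)).toLinearMap

/-- The Moyal product
`A ⋆ B = Σ_k (1/k!)(iℏ/2)^k Σ_{j=0}^k (−1)^j C(k,j) (∂_x^{k−j}∂_p^j A)(∂_x^j ∂_p^{k−j} B)`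
(a finite sum for polynomials). -/
def moyal (ℏ : ℝ) (A B : Pxp) : Pxp :=
  ∑ k ∈ Finset.range (A.totalDegree + 1),
    ((1 / (k.factorial : ℂ)) * (Complex.I * ℏ / 2) ^ k) •
      ∑ j ∈ Finset.range (k + 1),
        ((-1 : ℂ) ^ j * (k.choose j : ℂ)) •
          (((Dx ^ (k - j) * Dp ^ j) A) * ((Dx ^ j * Dp ^ (k - j)) B))


open TensorProduct in
/-- the bidifferential operator -/
def TT : Module.End ℂ (Pxp ⊗[ℂ] Pxp) :=
  TensorProduct.map Dx Dp - TensorProduct.map Dp Dx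

open TensorProduct in
/-- the k-th bidifferential term -/
def SS (k : ℕ) : Pxp →ₗ[ℂ] Pxp →ₗ[ℂ] Pxp :=
  TensorProduct.curry (LinearMap.mul' ℂ Pxp ∘ₗ (TT ^ k))

lemma SS_zero (A B : Pxp) : SS 0 A B = A * B := by simp [SS]

lemma SS_succ (k : ℕ) (A B : Pxp) :
    SS (k+1) A B = SS k (Dx A) (Dp B) - SS k (Dp A) (Dx B) := by
  simp only [SS, TensorProduct.curry_apply, LinearMap.comp_apply, pow_succ, Module.End.mul_apply]
  rw [← map_sub, ← map_sub]
  simp [TT]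

lemma DxDp : Commute Dx Dp := by
  show Dx * Dp = Dp * Dx
  have h2 : ⁅(pderiv 0 : Derivation ℂ Pxp Pxp), (pderiv 1 : Derivation ℂ Pxp Pxp)⁆ = 0 := by
    apply MvPolynomial.derivation_ext
    intro i
    fin_cases i <;> simp [Derivation.commutator_apply, pderiv_X]
  refine LinearMap.ext fun A => ?_
  have h := congrArg (fun D : Derivation ℂ Pxp Pxp => D A) h2
  simp only [Derivation.commutator_apply, Derivation.zero_apply] at h
  exact sub_eq_zero.1 h

lemma DxDp' (A : Pxp) : Dx (Dp A) = Dp (Dx A) := congrArg (fun f => f A) DxDp.eq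

lemma binom_smul {E : Type*} [Semiring E] [Algebra ℂ E] (U W : E) (h : Commute U W) (k : ℕ) :
    (U + (-1 : ℂ) • W) ^ k = ∑ j ∈ Finset.range (k + 1),
      ((-1 : ℂ) ^ j * (k.choose j : ℂ)) • (U ^ (k - j) * W ^ j) := by
  have hc : Commute ((-1 : ℂ) • W) U := h.symm.smul_left _
  rw [add_comm, hc.add_pow]
  refine Finset.sum_congr rfl fun j _ => ?_
  rw [(hc.pow_pow j (k-j)).eq, smul_pow, mul_smul_comm, smul_mul_assoc, mul_smul]
  congr 1
  rw [← nsmul_eq_mul', Nat.cast_smul_eq_nsmul]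

lemma SS_sum (k : ℕ) (A B : Pxp) :
    SS k A B = ∑ j ∈ Finset.range (k + 1),
        ((-1 : ℂ) ^ j * (k.choose j : ℂ)) •
          (((Dx ^ (k - j) * Dp ^ j) A) * ((Dx ^ j * Dp ^ (k - j)) B)) := by
  obtain ⟨U, hU⟩ : ∃ U : Module.End ℂ (TensorProduct ℂ Pxp Pxp), U = TensorProduct.map Dx Dp :=
    ⟨_, rfl⟩
  obtain ⟨W, hW⟩ : ∃ W : Module.End ℂ (TensorProduct ℂ Pxp Pxp), W = TensorProduct.map Dp Dx :=
    ⟨_, rfl⟩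
  have hc : Commute U W := by
    show _ * _ = _ * _
    rw [hU, hW, ← TensorProduct.map_mul, ← TensorProduct.map_mul, DxDp.eq]
  have hT : TT = U + (-1 : ℂ) • W := by
    rw [TT, hU, hW]; module
  simp only [SS, TensorProduct.curry_apply, LinearMap.comp_apply]
  rw [hT, binom_smul U W hc, LinearMap.sum_apply, map_sum]
  refine Finset.sum_congr rfl fun j _ => ?_
  rw [hU, hW, TensorProduct.map_pow, TensorProduct.map_pow, (DxDp.pow_pow j (k-j)).eq,
    LinearMap.smul_apply, map_smul]
  rfl

lemma Dx_mul (A B : Pxp) : Dx (A * B) = Dx A * B + A * Dx B := by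
  simp [Dx, Derivation.leibniz]; ring
lemma Dp_mul (A B : Pxp) : Dp (A * B) = Dp A * B + A * Dp B := by
  simp [Dp, Derivation.leibniz]; ring
lemma Dx_x : Dx xv = 1 := by simp [Dx, xv]
lemma Dp_x : Dp xv = 0 := by simp [Dp, xv, pderiv_X]
lemma Dx_p : Dx pv = 0 := by simp [Dx, pv, pderiv_X]
lemma Dp_p : Dp pv = 1 := by simp [Dp, pv]

lemma SS_Dx (k : ℕ) : ∀ A B, Dx (SS k A B) = SS k (Dx A) B + SS k A (Dx B) := by
  induction k with
  | zero => intro A B; simp [SS_zero, Dx_mul]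
  | succ k ih => intro A B; simp only [SS_succ, map_sub, ih, DxDp']; abel
lemma SS_Dp (k : ℕ) : ∀ A B, Dp (SS k A B) = SS k (Dp A) B + SS k A (Dp B) := by
  induction k with
  | zero => intro A B; simp [SS_zero, Dp_mul]
  | succ k ih => intro A B; simp only [SS_succ, map_sub, ih, DxDp']; abel

lemma SS_x (k : ℕ) : ∀ A B, SS (k+1) (xv * A) B
    = xv * SS (k+1) A B + ((k+1 : ℕ) : ℂ) • SS k A (Dp B) := by
  induction k with
  | zero => intro A B; simp [SS_zero, SS_succ, Dx_mul, Dp_mul, Dx_x, Dp_x]; ring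
  | succ k ih =>
    intro A B
    rw [SS_succ, Dx_mul, Dp_mul, Dx_x, Dp_x, SS_succ (k+1) A B]
    simp only [one_mul, zero_mul, zero_add, map_add, LinearMap.add_apply, ih, mul_sub]
    rw [SS_succ k A (Dp B), DxDp']
    push_cast
    module

lemma SS_p (k : ℕ) : ∀ A B, SS (k+1) (pv * A) B
    = pv * SS (k+1) A B - ((k+1 : ℕ) : ℂ) • SS k A (Dx B) := by
  induction k with
  | zero => intro A B; simp [SS_zero, SS_succ, Dx_mul, Dp_mul, Dx_p, Dp_p]; ring
  | succ k ih =>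
    intro A B
    rw [SS_succ, Dx_mul, Dp_mul, Dx_p, Dp_p, SS_succ (k+1) A B]
    simp only [one_mul, zero_mul, zero_add, map_add, LinearMap.add_apply, ih, mul_sub]
    rw [SS_succ k A (Dx B), DxDp']
    push_cast
    module

lemma totalDegree_pd (i : Fin 2) (A : Pxp) (k : ℕ) (h : A.totalDegree < k + 1) :
    pderiv i A = 0 ∨ (pderiv i A).totalDegree < k := by
  by_cases h0 : pderiv i A = 0
  · exact Or.inl h0
  right
  have key : ∀ m ∈ (pderiv i A).support, m.degree < k := by
    intro m hm
    rw [mem_support_iff, coeff_pderiv] at hm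
    have hm : m + Finsupp.single i 1 ∈ A.support := by
      rw [mem_support_iff]; intro h; simp [h] at hm
    have := le_totalDegree hm
    change (m + Finsupp.single i 1).degree ≤ _ at this
    rw [map_add, Finsupp.degree_single] at this
    omega
  obtain ⟨m, hm⟩ := Finset.nonempty_iff_ne_empty.2 (fun h => h0 (support_eq_empty.1 h))
  have hk := key m hm
  exact (Finset.sup_lt_iff (by simp; omega)).2 key

lemma SS_vanish (k : ℕ) : ∀ A B, A.totalDegree < k → SS k A B = 0 := by
  induction k with
  | zero => intro A B h; omega
  | succ k ih =>
    intro A B h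
    rw [SS_succ]
    have h1 : SS k (Dx A) (Dp B) = 0 := by
      rcases totalDegree_pd 0 A k h with h | h
      · have : Dx A = 0 := h
        simp [this]
      · exact ih _ _ h
    have h2 : SS k (Dp A) (Dx B) = 0 := by
      rcases totalDegree_pd 1 A k h with h | h
      · have : Dp A = 0 := h
        simp [this]
      · exact ih _ _ h
    rw [h1, h2, sub_zero]

/-- truncated star product -/
def star' (c : ℂ) (N : ℕ) : Pxp →ₗ[ℂ] Pxp →ₗ[ℂ] Pxp :=
  ∑ k ∈ Finset.range N, ((1 / (k.factorial : ℂ)) * c ^ k) • SS k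

lemma star'_apply (c : ℂ) (N : ℕ) (A B : Pxp) : star' c N A B =
    ∑ k ∈ Finset.range N, ((1 / (k.factorial : ℂ)) * c ^ k) • SS k A B := by
  simp [star', LinearMap.sum_apply]

lemma moyal_eq (ℏ : ℝ) (A B : Pxp) (N : ℕ) (h : A.totalDegree < N) :
    moyal ℏ A B = star' (Complex.I * ℏ / 2) N A B := by
  rw [star'_apply, moyal]
  simp only [← SS_sum]
  apply Finset.sum_subset
  · intro k; simp; omega
  · intro k _ hk
    rw [SS_vanish, smul_zero]
    simpa using hk

lemma star'_x (c : ℂ) (N : ℕ) (A B : Pxp) : star' c (N+1) (xv * A) B =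
    xv * star' c (N+1) A B + c • star' c N A (Dp B) := by
  simp only [star'_apply]
  rw [Finset.sum_range_succ', Finset.sum_range_succ', mul_add, Finset.mul_sum, Finset.smul_sum]
  rw [add_right_comm, ← Finset.sum_add_distrib]
  congr 1
  · refine Finset.sum_congr rfl fun k _ => ?_
    rw [SS_x, smul_add, mul_smul_comm, smul_smul, smul_smul]
    congr 2
    have : (k.factorial : ℂ) ≠ 0 := by exact_mod_cast k.factorial_ne_zero
    have : (k + 1 : ℂ) ≠ 0 := by exact_mod_cast k.succ_ne_zero
    rw [Nat.factorial_succ]; push_cast; field_simp; ring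
  · simp [SS_zero, mul_assoc]

lemma star'_p (c : ℂ) (N : ℕ) (A B : Pxp) : star' c (N+1) (pv * A) B =
    pv * star' c (N+1) A B - c • star' c N A (Dx B) := by
  simp only [star'_apply]
  rw [Finset.sum_range_succ', Finset.sum_range_succ', mul_add, Finset.mul_sum, Finset.smul_sum]
  rw [add_sub_right_comm, ← Finset.sum_sub_distrib]
  congr 1
  · refine Finset.sum_congr rfl fun k _ => ?_
    rw [SS_p, smul_sub, mul_smul_comm, smul_smul, smul_smul]
    congr 2
    have : (k.factorial : ℂ) ≠ 0 := by exact_mod_cast k.factorial_ne_zero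
    have : (k + 1 : ℂ) ≠ 0 := by exact_mod_cast k.succ_ne_zero
    rw [Nat.factorial_succ]; push_cast; field_simp; ring
  · simp [SS_zero, mul_assoc]

lemma star'_Dx (c : ℂ) (N : ℕ) (A B : Pxp) : Dx (star' c N A B) =
    star' c N (Dx A) B + star' c N A (Dx B) := by
  simp only [star'_apply, map_sum, map_smul, SS_Dx, smul_add, Finset.sum_add_distrib]
lemma star'_Dp (c : ℂ) (N : ℕ) (A B : Pxp) : Dp (star' c N A B) =
    star' c N (Dp A) B + star' c N A (Dp B) := by
  simp only [star'_apply, map_sum, map_smul, SS_Dp, smul_add, Finset.sum_add_distrib]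

lemma exN (l : List Pxp) : ∃ N, ∀ A ∈ l, A.totalDegree < N := by
  induction l with
  | nil => simp
  | cons a l ih =>
    obtain ⟨N, hN⟩ := ih
    refine ⟨max N (a.totalDegree + 1), ?_⟩
    intro A hA
    rcases List.mem_cons.1 hA with rfl | h
    · omega
    · have := hN A h; omega

lemma moyal_add (ℏ : ℝ) (A A' B : Pxp) : moyal ℏ (A + A') B = moyal ℏ A B + moyal ℏ A' B := by
  obtain ⟨N, hN⟩ := exN [A, A', A + A']
  simp only [List.mem_cons, List.not_mem_nil, or_false, forall_eq_or_imp, forall_eq] at hN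
  rw [moyal_eq ℏ A B N hN.1, moyal_eq ℏ A' B N hN.2.1, moyal_eq ℏ _ B N hN.2.2]
  simp

lemma moyal_smul (ℏ : ℝ) (c : ℂ) (A B : Pxp) : moyal ℏ (c • A) B = c • moyal ℏ A B := by
  obtain ⟨N, hN⟩ := exN [A, c • A]
  simp only [List.mem_cons, List.not_mem_nil, or_false, forall_eq_or_imp, forall_eq] at hN
  rw [moyal_eq ℏ A B N hN.1, moyal_eq ℏ _ B N hN.2]
  simp

lemma moyal_x (ℏ : ℝ) (A B : Pxp) : moyal ℏ (xv * A + (Complex.I * ℏ / 2) • Dp A) B =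
    xv * moyal ℏ A B + (Complex.I * ℏ / 2) • Dp (moyal ℏ A B) := by
  obtain ⟨N, hN⟩ := exN [A, Dp A, xv * A + (Complex.I * ℏ / 2) • Dp A]
  simp only [List.mem_cons, List.not_mem_nil, or_false, forall_eq_or_imp, forall_eq] at hN
  obtain ⟨h1, h2, h3⟩ := hN
  rw [moyal_eq ℏ _ B (N+1) (by omega), moyal_eq ℏ A B (N+1) (by omega), star'_Dp]
  have : star' (Complex.I * ℏ / 2) (N+1) A (Dp B) = star' (Complex.I * ℏ / 2) N A (Dp B) := by
    rw [← moyal_eq _ _ _ _ h1, ← moyal_eq _ _ _ _ (by omega)]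
  rw [this]
  simp only [map_add, LinearMap.add_apply, map_smul, LinearMap.smul_apply, star'_x, smul_add]
  abel

lemma moyal_p (ℏ : ℝ) (A B : Pxp) : moyal ℏ (pv * A - (Complex.I * ℏ / 2) • Dx A) B =
    pv * moyal ℏ A B - (Complex.I * ℏ / 2) • Dx (moyal ℏ A B) := by
  obtain ⟨N, hN⟩ := exN [A, Dx A, pv * A - (Complex.I * ℏ / 2) • Dx A]
  simp only [List.mem_cons, List.not_mem_nil, or_false, forall_eq_or_imp, forall_eq] at hN
  obtain ⟨h1, h2, h3⟩ := hN
  rw [moyal_eq ℏ _ B (N+1) (by omega), moyal_eq ℏ A B (N+1) (by omega), star'_Dx]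
  have : star' (Complex.I * ℏ / 2) (N+1) A (Dx B) = star' (Complex.I * ℏ / 2) N A (Dx B) := by
    rw [← moyal_eq _ _ _ _ h1, ← moyal_eq _ _ _ _ (by omega)]
  rw [this]
  simp only [map_sub, LinearMap.sub_apply, map_smul, LinearMap.smul_apply, star'_p, smul_add]
  abel

lemma comm_a : (aop : Module.End ℂ (ℕ →₀ ℂ)) * (adop : Module.End ℂ (ℕ →₀ ℂ))
    = (adop : Module.End ℂ (ℕ →₀ ℂ)) * (aop : Module.End ℂ (ℕ →₀ ℂ)) + 1 := by
  have hs : ∀ n : ℕ, ((Real.sqrt (n + 1) : ℝ) : ℂ) * ((Real.sqrt (n + 1) : ℝ) : ℂ) = n + 1 := by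
    intro n
    rw [← Complex.ofReal_mul, Real.mul_self_sqrt (by positivity)]; push_cast; rfl
  have had : ∀ (n : ℕ) (z : ℂ), adop (Finsupp.single n z) =
      Finsupp.single (n+1) (((Real.sqrt (n + 1) : ℝ) : ℂ) * z) := by
    intro n z; simp [adop]
  have ha0 : ∀ (z : ℂ), aop (Finsupp.single 0 z) = 0 := by
    intro z; simp [aop]
  have ha : ∀ (n : ℕ) (z : ℂ), aop (Finsupp.single (n+1) z) =
      Finsupp.single n (((Real.sqrt (n + 1) : ℝ) : ℂ) * z) := by
    intro n z; simp [aop]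
  apply Finsupp.lhom_ext
  intro n z
  rw [LinearMap.add_apply, Module.End.mul_apply, Module.End.mul_apply, had, ha, ← mul_assoc, hs,
    Module.End.one_apply]
  cases n with
  | zero => rw [ha0]; simp
  | succ n => rw [ha, had, ← mul_assoc, hs, ← Finsupp.single_add]; congr 1; push_cast; ring

/-- normal ordered coefficient -/
def dd (m n s : ℕ) : ℂ := s.factorial * m.choose s * n.choose s

/-- Weyl ordered monomial -/
def GG {E : Type*} [Ring E] [Algebra ℂ E] (P Q : E) (c : ℂ) (N m n : ℕ) : E :=
  ∑ s ∈ Finset.range N, (c ^ s * dd m n s) • (P ^ (m - s) * Q ^ (n - s))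

lemma GG_stab {E : Type*} [Ring E] [Algebra ℂ E] (P Q : E) (c : ℂ) (N m n : ℕ)
    (h : min m n < N) : GG P Q c N m n = GG P Q c (min m n + 1) m n := by
  symm
  apply Finset.sum_subset
  · intro k; simp; omega
  · intro k _ hk
    have hk : min m n < k := by rw [Finset.mem_range] at hk; omega
    have : dd m n k = 0 := by
      rcases min_lt_iff.1 hk with h | h <;> simp [dd, Nat.choose_eq_zero_of_lt h]
    simp [this]

lemma dd_p (m n s : ℕ) : dd (m+1) n (s+1) = dd m n (s+1) + n * dd m (n-1) s := by
  cases n with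
  | zero => simp [dd]
  | succ n =>
    have := Nat.add_one_mul_choose_eq n s
    have : ((n : ℂ) + 1) * n.choose s = (n+1).choose (s+1) * (s + 1) := by exact_mod_cast this
    simp only [dd, Nat.choose_succ_succ m s, Nat.factorial_succ, Nat.add_sub_cancel]
    push_cast
    linear_combination (-(s.factorial : ℂ) * m.choose s) * this

lemma dd_x (m n s : ℕ) : dd m (n+1) (s+1) + m * dd (m-1) n s
    = dd m n (s+1) + 2 * ((m - s : ℕ) : ℂ) * dd m n s := by
  have h2 := Nat.choose_succ_right_eq m s
  have h2 : (m.choose (s+1) : ℂ) * (s + 1) = m.choose s * ((m - s : ℕ) : ℂ) := by exact_mod_cast h2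
  have h3 : (m : ℂ) * (m-1).choose s = m.choose (s+1) * (s + 1) := by
    cases m with
    | zero => simp
    | succ m => exact_mod_cast Nat.add_one_mul_choose_eq m s
  simp only [dd, Nat.choose_succ_succ n s, Nat.factorial_succ]
  push_cast
  linear_combination ((s.factorial : ℂ) * n.choose s) * h3 + (2 * (s.factorial : ℂ) * n.choose s) * h2

lemma dd_zero (m n s : ℕ) (h : m < s ∨ n < s) : dd m n s = 0 := by
  rcases h with h | h <;> simp [dd, Nat.choose_eq_zero_of_lt h]

lemma GG_p {E : Type*} [Ring E] [Algebra ℂ E] (P Q : E) (c : ℂ) (N m n : ℕ) :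
    GG P Q c (N+1) (m+1) n = P * GG P Q c (N+1) m n + (c * n) • GG P Q c N m (n-1) := by
  simp only [GG]
  rw [Finset.sum_range_succ', Finset.sum_range_succ', mul_add, Finset.mul_sum, Finset.smul_sum]
  rw [add_right_comm, ← Finset.sum_add_distrib]
  congr 1
  · refine Finset.sum_congr rfl fun s _ => ?_
    rw [dd_p, mul_smul_comm, ← mul_assoc, ← pow_succ', smul_smul,
      show n - 1 - s = n - (s+1) by omega, Nat.add_sub_add_right]
    by_cases h : m < s + 1
    · rw [dd_zero m n (s+1) (Or.inl h)]
      rw [mul_zero, zero_smul, zero_add, zero_add]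
      congr 1; ring
    · rw [show m - (s+1) + 1 = m - s by omega, ← add_smul]
      congr 1; ring
  · simp [dd, pow_succ', mul_assoc]

lemma QP {E : Type*} [Ring E] [Algebra ℂ E] (P Q : E) (c : ℂ)
    (h : Q * P = P * Q + (2 * c) • 1) (j : ℕ) :
    Q * P ^ j = P ^ j * Q + (2 * c * j) • P ^ (j-1) := by
  induction j with
  | zero => simp
  | succ j ih =>
    rw [pow_succ, ← mul_assoc, ih, add_mul, mul_assoc, h, smul_mul_assoc, mul_add, mul_smul_comm]
    cases j with
    | zero => simp
    | succ j =>
      rw [mul_one, Nat.add_sub_cancel, Nat.add_sub_cancel, ← pow_succ P j,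
        mul_assoc (P ^ (j+1)) P Q, add_assoc, ← add_smul]
      congr 2
      push_cast; ring

lemma GG_x {E : Type*} [Ring E] [Algebra ℂ E] (P Q : E) (c : ℂ)
    (h : Q * P = P * Q + (2 * c) • 1) (N m n : ℕ) (hN : m ≤ N) :
    GG P Q c (N+1) m (n+1) + (c * m) • GG P Q c N (m-1) n = Q * GG P Q c (N+1) m n := by
  have hQ : Q * GG P Q c (N+1) m n =
      ∑ s ∈ Finset.range (N+1), (c ^ s * dd m n s) • (P ^ (m - s) * Q ^ (n + 1 - s)) +
      ∑ s ∈ Finset.range (N+1), (c ^ s * dd m n s * (2 * c * ((m - s : ℕ) : ℂ))) •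
        (P ^ (m - s - 1) * Q ^ (n - s)) := by
    rw [GG, Finset.mul_sum, ← Finset.sum_add_distrib]
    refine Finset.sum_congr rfl fun s _ => ?_
    rw [mul_smul_comm, ← mul_assoc, QP P Q c h, add_mul, smul_mul_assoc, smul_add, smul_smul]
    congr 1
    by_cases hs : n < s
    · simp [dd_zero m n s (Or.inr hs)]
    · rw [mul_assoc, ← pow_succ', show n - s + 1 = n + 1 - s by omega]
  rw [hQ, Finset.sum_range_succ', Finset.sum_range_succ _ N]
  simp only [GG]
  rw [Finset.sum_range_succ', Finset.smul_sum]
  rw [show m - N = 0 by omega]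
  simp only [Nat.cast_zero, mul_zero, zero_smul, add_zero]
  rw [add_right_comm, ← Finset.sum_add_distrib, add_right_comm (∑ k ∈ range N, _), ← Finset.sum_add_distrib]
  congr 1
  · refine Finset.sum_congr rfl fun s _ => ?_
    rw [smul_smul, show m - 1 - s = m - (s+1) by omega, show m - s - 1 = m - (s+1) by omega,
      Nat.add_sub_add_right, ← add_smul, ← add_smul]
    congr 1
    linear_combination c ^ (s+1) * dd_x m n s
  · simp [dd]

lemma mono_ind (p : Pxp → Prop) (hadd : ∀ A B, p A → p B → p (A + B))
    (hsmul : ∀ (c : ℂ) A, p A → p (c • A)) (hm : ∀ m n : ℕ, p (pv ^ m * xv ^ n)) (A : Pxp) :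
    p A := by
  induction A using MvPolynomial.induction_on' with
  | monomial u a =>
    have : monomial u a = a • (pv ^ (u 1) * xv ^ (u 0)) := by
      rw [monomial_eq, Finsupp.prod_fintype _ _ (by simp), Fin.prod_univ_two, smul_eq_C_mul,
        pv, xv, mul_comm (X 0 ^ _)]
    rw [this]
    exact hsmul _ _ (hm _ _)
  | add p q hp hq => exact hadd _ _ hp hq

lemma Dp_mono (m n : ℕ) : Dp (pv ^ m * xv ^ n) = (m : ℂ) • (pv ^ (m-1) * xv ^ n) := by
  simp [Dp, pv, xv, Derivation.leibniz, Derivation.leibniz_pow, pderiv_X, smul_eq_C_mul]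
  ring
lemma Dx_mono (m n : ℕ) : Dx (pv ^ m * xv ^ n) = (n : ℂ) • (pv ^ m * xv ^ (n-1)) := by
  simp [Dx, pv, xv, Derivation.leibniz, Derivation.leibniz_pow, pderiv_X, smul_eq_C_mul]
  ring

lemma core {E : Type*} [Ring E] [Algebra ℂ E] (ℏ : ℝ) (ΦW : Pxp →ₗ[ℂ] E) (P Q : E) (c : ℂ)
    (hc : c = Complex.I * ℏ / 2) (hcomm : Q * P = P * Q + (2 * c) • 1)
    (hG : ∀ m n N : ℕ, min m n < N → ΦW (pv ^ m * xv ^ n) = GG P Q c N m n) :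
    ∀ A B : Pxp, ΦW (moyal ℏ A B) = ΦW A * ΦW B := by
  have hx : ∀ B, ΦW (xv * B + c • Dp B) = Q * ΦW B := by
    apply mono_ind
    · intro A B hA hB
      rw [map_add ΦW A B, mul_add _ (ΦW A), ← hA, ← hB, ← map_add]
      congr 1
      rw [map_add, mul_add, smul_add]; abel
    · intro a A hA
      rw [map_smul ΦW a A, mul_smul_comm _ _ (ΦW A), ← hA, ← map_smul ΦW, map_smul Dp, mul_smul_comm, smul_add, smul_comm]
    · intro m n
      rw [Dp_mono, show xv * (pv ^ m * xv ^ n) = pv ^ m * xv ^ (n+1) by ring, smul_smul, map_add,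
        map_smul, hG m (n+1) (m+1+1) (by omega), hG (m-1) n (m+1) (by omega),
        hG m n (m+1+1) (by omega), GG_x P Q c hcomm _ _ _ (by omega)]
  have hp : ∀ B, ΦW (pv * B - c • Dx B) = P * ΦW B := by
    apply mono_ind
    · intro A B hA hB
      rw [map_add ΦW A B, mul_add _ (ΦW A), ← hA, ← hB, ← map_add]
      congr 1
      rw [map_add, mul_add, smul_add]; abel
    · intro a A hA
      rw [map_smul ΦW a A, mul_smul_comm _ _ (ΦW A), ← hA, ← map_smul ΦW, map_smul Dx, mul_smul_comm, smul_sub, smul_comm]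
    · intro m n
      rw [Dx_mono, show pv * (pv ^ m * xv ^ n) = pv ^ (m+1) * xv ^ n by ring, smul_smul, map_sub,
        map_smul, hG (m+1) n (m+1+1) (by omega), hG m (n-1) (m+1) (by omega),
        hG m n (m+1+1) (by omega), GG_p, add_sub_cancel_right]
  intro A B
  revert A
  apply mono_ind
  · intro A A' h h'
    rw [moyal_add, map_add, map_add, h, h', add_mul]
  · intro a A h
    rw [moyal_smul, map_smul, map_smul, h, smul_mul_assoc]
  have gx : ∀ A, ΦW (moyal ℏ A B) = ΦW A * ΦW B →
      ΦW (moyal ℏ (xv * A + c • Dp A) B) = ΦW (xv * A + c • Dp A) * ΦW B := by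
    intro A h
    rw [hx, mul_assoc, ← h, ← hx, hc, moyal_x]
  have gp : ∀ A, ΦW (moyal ℏ A B) = ΦW A * ΦW B →
      ΦW (moyal ℏ (pv * A - c • Dx A) B) = ΦW (pv * A - c • Dx A) * ΦW B := by
    intro A h
    rw [hp, mul_assoc, ← h, ← hp, hc, moyal_p]
  intro m n
  induction n generalizing m with
  | zero =>
    induction m with
    | zero =>
      have h1 : ΦW (pv ^ 0 * xv ^ 0) = 1 := by
        rw [hG 0 0 1 (by omega)]; simp [GG, dd]
      rw [h1, one_mul, moyal_eq ℏ _ B 1 (by simp), star'_apply]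
      simp [SS_zero]
    | succ m ih =>
      have h := gp _ ih
      rw [Dx_mono] at h
      simpa [pow_succ', mul_assoc] using h
  | succ n ih =>
    have h := gx _ (ih m)
    have h2 := ih (m-1)
    rw [Dp_mono, smul_smul, moyal_add, moyal_smul, map_add, map_add, map_smul, map_smul, h2,
      add_mul, smul_mul_assoc, add_left_inj] at h
    have h3 : pv ^ m * xv ^ (n+1) = xv * (pv ^ m * xv ^ n) := by ring
    rw [h3]
    exact h


/-- the Weyl map
`Φ_W(p^m x^n) = Σ_{s=0}^{min(m,n)} ((iℏ)^s m!n!/(2^s s!(m−s)!(n−s)!)) F^{(m−s,n−s)}`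
is a homomorphism from the Moyal algebra: `Φ_W(A ⋆ B) = Φ_W(A) ∘ Φ_W(B)`. -/
theorem stmt14 (ℏ : ℝ) (hℏ : ℏ ≠ 0)
    (ΦW : Pxp →ₗ[ℂ] Module.End ℂ (ℕ →₀ ℂ))
    (hΦW : ∀ m n : ℕ, ΦW (pv ^ m * xv ^ n) =
      ∑ s ∈ Finset.range (min m n + 1),
        ((Complex.I * ℏ) ^ s * (m.factorial * n.factorial : ℂ) /
          (2 ^ s * s.factorial * (m - s).factorial * (n - s).factorial)) •
          F ℏ (m - s) (n - s)) :
    ∀ A B : Pxp, ΦW (moyal ℏ A B) = ΦW A * ΦW B := by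
  obtain ⟨P, hP⟩ : ∃ P : Module.End ℂ (ℕ →₀ ℂ),
    P = (-(Complex.I * ℏ)) • (aop : Module.End ℂ (ℕ →₀ ℂ)) := ⟨_, rfl⟩
  obtain ⟨Q, hQ⟩ : ∃ Q : Module.End ℂ (ℕ →₀ ℂ), Q = adop := ⟨_, rfl⟩
  obtain ⟨c, hc⟩ : ∃ c : ℂ, c = Complex.I * ℏ / 2 := ⟨_, rfl⟩
  have hcomm : Q * P = P * Q + (2 * c) • 1 := by
    rw [hP, hQ, hc, mul_smul_comm, smul_mul_assoc, comm_a]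
    module
  have hG : ∀ m n N : ℕ, min m n < N → ΦW (pv ^ m * xv ^ n) = GG P Q c N m n := by
    intro m n N h
    rw [GG_stab _ _ _ _ _ _ h, hΦW, GG]
    refine Finset.sum_congr rfl fun s hs => ?_
    have hs : s ≤ m ∧ s ≤ n := by rw [Finset.mem_range] at hs; omega
    rw [F, ← hP, ← hQ]
    congr 1
    rw [dd, Nat.cast_choose ℂ hs.1, Nat.cast_choose ℂ hs.2, hc, div_pow]
    have h1 : (s.factorial : ℂ) ≠ 0 := by exact_mod_cast s.factorial_ne_zero
    have h2 : ((m-s).factorial : ℂ) ≠ 0 := by exact_mod_cast (m-s).factorial_ne_zero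
    have h3 : ((n-s).factorial : ℂ) ≠ 0 := by exact_mod_cast (n-s).factorial_ne_zero
    field_simp
  exact core ℏ ΦW P Q c hc hcomm hG

end
end
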